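/- Let R be a Z²-algebra over a field k satisfying the standing assumptions and let (m,n) ∈ Z². Set N := dim_k R_{(m,n),(m+1,n)} and N' := dim_k R_{(m,n),(m,n+1)}. Then there exist morphisms e_{(m+1,n)}R^{⊕N} → e_{(m,n)}R and e_{(m,n+1)}R^{⊕N'} → e_{(m,n)}R in Gr(R) whose cokernels are torsion modules (the first cokernel vanishes in all degrees (x,y) with x > m and y ≥ n, the second in all degrees with x ≥ m and y > n); consequently both induced morphisms in QGr(R) are epimorphisms. -/

import Mathlib

/- Shared infrastructure: `G`-algebras over a field `k` (Z²-algebras when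
`G = ℤ × ℤ`, Z-algebras when `G = ℤ`), their graded right modules, torsion
modules and the quotient category `QGr` (realized, following
Gabriel/Serre, as the localization of `Gr` at the morphisms having torsion
kernel and cokernel). -/

open CategoryTheory Limits

noncomputable section

set_option autoImplicit false

/-- A `G`-algebra over `k`: components `C a b`, bilinear multiplication,
local units.  For `G = ℤ × ℤ` this is exactly a `ℤ²`-algebra. -/
structure GAlgebra (k : Type) [Field k] (G : Type) where
  C : G → G → Type
  [acg : ∀ a b, AddCommGroup (C a b)]
  [mod : ∀ a b, Module k (C a b)]
  mul : ∀ {a b c : G}, C a b →ₗ[k] C b c →ₗ[k] C a c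
  one : ∀ a, C a a
  one_mul : ∀ {a b : G} (x : C a b), mul (one a) x = x
  mul_one : ∀ {a b : G} (x : C a b), mul x (one b) = x
  mul_assoc : ∀ {a b c d : G} (x : C a b) (y : C b c) (z : C c d),
    mul (mul x y) z = mul x (mul y z)

attribute [instance] GAlgebra.acg GAlgebra.mod

variable {k : Type} [Field k] {G : Type}

/-- A graded right module over a `G`-algebra. -/
structure GrMod (R : GAlgebra k G) where
  M : G → Type
  [acg : ∀ a, AddCommGroup (M a)]
  [mod : ∀ a, Module k (M a)]
  act : ∀ {a b : G}, M a →ₗ[k] R.C a b →ₗ[k] M b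
  act_one : ∀ {a : G} (x : M a), act x (R.one a) = x
  act_mul : ∀ {a b c : G} (x : M a) (r : R.C a b) (s : R.C b c),
    act (act x r) s = act x (R.mul r s)

attribute [instance] GrMod.acg GrMod.mod

/-- Morphisms of graded modules. -/
@[ext]
structure GrHom {R : GAlgebra k G} (M N : GrMod R) where
  app : ∀ a, M.M a →ₗ[k] N.M a
  natural : ∀ {a b : G} (x : M.M a) (r : R.C a b),
    app b (M.act x r) = N.act (app a x) r

/-- The category `Gr(R)` of graded right `R`-modules. -/
instance GrMod.instCategory (R : GAlgebra k G) : Category (GrMod R) where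
  Hom M N := GrHom M N
  id M := ⟨fun _ => LinearMap.id, fun _ _ => rfl⟩
  comp f g := ⟨fun a => (g.app a).comp (f.app a), fun x r => by
    simp only [LinearMap.comp_apply, f.natural, g.natural]⟩
  id_comp f := rfl
  comp_id f := rfl
  assoc f g h := rfl

/-- The projective generator `e_a R` of `Gr(R)`. -/
def freeMod (R : GAlgebra k G) (a : G) : GrMod R where
  M b := R.C a b
  act := R.mul
  act_one := R.mul_one
  act_mul := R.mul_assoc

/-- Finite direct sums in `Gr(R)`. -/
def fdsum {R : GAlgebra k G} {n : ℕ} (F : Fin n → GrMod R) : GrMod R where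
  M a := ∀ i, (F i).M a
  act {a b} := LinearMap.mk₂ k (fun x r i => (F i).act (x i) r)
    (fun x y r => by funext i; simp)
    (fun c x r => by funext i; simp)
    (fun x r s => by funext i; simp)
    (fun c x r => by funext i; simp)
  act_one {a} x := by funext i; exact (F i).act_one (x i)
  act_mul {a b c} x r s := by funext i; exact (F i).act_mul (x i) r s

/-- The morphism `e_i R ⟶ e_j R` given by left multiplication with
`r ∈ R_{j,i}`; this realizes the canonical identification
`Hom(e_i R, e_j R) ≅ R_{j,i}`. -/
def freeHom {R : GAlgebra k G} {i j : G} (r : R.C j i) :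
    freeMod R i ⟶ freeMod R j where
  app a := R.mul r
  natural x s := (R.mul_assoc r x s).symm

/-- A graded module is right-(upper-)bounded if it vanishes in all
sufficiently large degrees (for `G = ℤ×ℤ` with the product order this is
`M_{(i,j)} = 0` for all `i ≥ i₀, j ≥ j₀`). -/
def GrMod.IsBdd [LE G] {R : GAlgebra k G} (M : GrMod R) : Prop :=
  ∃ g0 : G, ∀ b : G, g0 ≤ b → ∀ x : M.M b, x = 0

/-- Torsion graded modules.  (A module is a direct limit of
right-upper-bounded modules iff every cyclic submodule is
right-upper-bounded, which is the elementwise form used here.) -/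
def IsTorsionMod [LE G] {R : GAlgebra k G} (N : GrMod R) : Prop :=
  ∀ (a : G) (x : N.M a), ∃ g0 : G, ∀ b : G, g0 ≤ b → ∀ r : R.C a b,
    N.act x r = 0

/-- A graded module is finitely generated if finitely many homogeneous
elements generate it. -/
def GrMod.IsFG {R : GAlgebra k G} (M : GrMod R) : Prop :=
  ∃ (n : ℕ) (d : Fin n → G) (g : ∀ i, M.M (d i)),
    ∀ (b : G) (y : M.M b), y ∈ Submodule.span k
      {z : M.M b | ∃ (i : Fin n) (r : R.C (d i) b), z = M.act (g i) r}

/-- Graded submodules of a graded module. -/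
structure GrSubmodule {R : GAlgebra k G} (N : GrMod R) where
  S : ∀ a, Submodule k (N.M a)
  act_mem : ∀ {a b : G} (x : N.M a), x ∈ S a → ∀ r : R.C a b, N.act x r ∈ S b

/-- A graded submodule is finitely generated if finitely many homogeneous
elements of it generate it. -/
def GrSubmodule.FG {R : GAlgebra k G} {N : GrMod R} (T : GrSubmodule N) : Prop :=
  ∃ (n : ℕ) (d : Fin n → G) (g : ∀ i, N.M (d i)) (_ : ∀ i, g i ∈ T.S (d i)),
    ∀ b : G, (T.S b : Set (N.M b)) ⊆
      ↑(Submodule.span k {z : N.M b | ∃ (i : Fin n) (r : R.C (d i) b),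
        z = N.act (g i) r})

/-- The morphisms of `Gr(R)` whose kernel and cokernel are torsion.
`QGr(R) = Gr(R)/Tors(R)` is the localization of `Gr(R)` at this class. -/
def torsionW [LE G] (R : GAlgebra k G) : MorphismProperty (GrMod R) :=
  fun M N f =>
    (∀ (a : G) (x : M.M a), GrHom.app f a x = 0 →
      ∃ g0 : G, ∀ b : G, g0 ≤ b → ∀ r : R.C a b, M.act x r = 0) ∧
    (∀ (a : G) (y : N.M a), ∃ g0 : G, ∀ b : G, g0 ≤ b → ∀ r : R.C a b,
      N.act y r ∈ LinearMap.range (GrHom.app f b))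

/-- The quotient category `QGr(R) := Gr(R)/Tors(R)`, realized as the
localization of `Gr(R)` at the morphisms with torsion kernel and cokernel. -/
abbrev QGr [LE G] (R : GAlgebra k G) := (torsionW R).Localization

/-- The diagonal-like sub-`ℤ`-algebra `R_Δ` of a `ℤ²`-algebra. -/
def diagAlg (R : GAlgebra k (ℤ × ℤ)) (Δ : ℤ → ℤ × ℤ) : GAlgebra k ℤ where
  C i j := R.C (Δ i) (Δ j)
  mul := R.mul
  one i := R.one (Δ i)
  one_mul := R.one_mul
  mul_one := R.mul_one
  mul_assoc := R.mul_assoc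

/-- `Δ : ℤ → ℤ²` is diagonal-like if every element of `ℤ²` lies below some
`Δ(i)` in the product order. -/
def DiagonalLike (Δ : ℤ → ℤ × ℤ) : Prop := ∀ ab : ℤ × ℤ, ∃ i : ℤ, ab ≤ Δ i

/-- The standing assumptions on a `ℤ²`-algebra `R`:
`Gr(R)` is locally Noetherian (equivalently: every graded submodule of each
projective generator `e_a R` is finitely generated), all components are
finite dimensional, `R_{(i,j),(i,j)} = k`, and `R₊` is generated in degrees
`(0,1)` and `(1,0)` (surjectivity of the multiplication maps, expressed via
spans of products). -/
structure Standing (R : GAlgebra k (ℤ × ℤ)) : Prop where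
  locNoeth : ∀ (a : ℤ × ℤ) (T : GrSubmodule (freeMod R a)), T.FG
  finDim : ∀ a b : ℤ × ℤ, FiniteDimensional k (R.C a b)
  diagK : ∀ (a : ℤ × ℤ) (x : R.C a a), ∃ c : k, x = c • R.one a
  genH : ∀ i j m n : ℤ, i < m → j ≤ n → ∀ x : R.C (i, j) (m, n),
    x ∈ Submodule.span k {y : R.C (i, j) (m, n) |
      ∃ (u : R.C (i, j) (i + 1, j)) (v : R.C (i + 1, j) (m, n)), y = R.mul u v}
  genV : ∀ i j m n : ℤ, i ≤ m → j < n → ∀ x : R.C (i, j) (m, n),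
    x ∈ Submodule.span k {y : R.C (i, j) (m, n) |
      ∃ (u : R.C (i, j) (i, j + 1)) (v : R.C (i, j + 1) (m, n)), y = R.mul u v}

/-!
Multiplication by a basis of `R_{a,c}` defines `e_c R^{⊕N} ⟶ e_a R`, whose image in degree `b` is
`R_{a,c} R_{c,b}`; if this is all of `R_{a,b}` for `b ≥ c`, the cokernel vanishes in degrees `≥ c`.

It remains to see that a morphism `f` with torsion cokernel becomes an epimorphism in `QGr(R)`.
If `f ≫ g₁ = f ≫ g₂`, then `g₁` and `g₂` agree on the image of `f`, so the image of `g₁ - g₂` is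
torsion and killing it is a morphism of `torsionW R` equalizing `g₁` and `g₂`. Moreover
`torsionW R` is stable under pushout. These two facts give a left calculus of fractions for the
closure of `torsionW R` under composition. Passing to this closure, which does not change the
localization, avoids showing that torsion modules are closed under extensions.
-/

section CalculusOfFractions

open MorphismProperty

variable {C D : Type*} [Category* C] [Category* D]

/-- The morphisms that are epimorphisms up to `W`: any two morphisms which they equalize become
equal after composition with a morphism in `W`. This is the cancellation condition in a left
calculus of fractions. -/
def epiModulo (W : MorphismProperty C) : MorphismProperty C := fun _ Y f =>
  ∀ ⦃Z : C⦄ (g₁ g₂ : Y ⟶ Z), f ≫ g₁ = f ≫ g₂ →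
    ∃ (Z' : C) (t : Z ⟶ Z') (_ : W t), g₁ ≫ t = g₂ ≫ t

/-- The morphisms satisfying the left Ore condition with respect to `W`: every span having such a
morphism as one leg completes to a commutative square whose opposite side is in `W`. -/
def leftOre (W : MorphismProperty C) : MorphismProperty C := fun X X' s =>
  ∀ ⦃Y : C⦄ (f : X ⟶ Y),
    ∃ (Y' : C) (f' : X' ⟶ Y') (s' : Y ⟶ Y') (_ : W s'), f ≫ s' = s ≫ f'

theorem epiModulo_mono {W W' : MorphismProperty C} (h : W ≤ W') : epiModulo W ≤ epiModulo W' :=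
  fun _ _ _ hf _ g₁ g₂ hg =>
    let ⟨Z', t, ht, e⟩ := hf g₁ g₂ hg
    ⟨Z', t, h _ ht, e⟩

theorem leftOre_mono {W W' : MorphismProperty C} (h : W ≤ W') : leftOre W ≤ leftOre W' :=
  fun _ _ _ hs _ f =>
    let ⟨Y', f', s', hs', e⟩ := hs f
    ⟨Y', f', s', h _ hs', e⟩

instance (W : MorphismProperty C) [W.IsMultiplicative] : (epiModulo W).IsMultiplicative where
  id_mem X Z g₁ g₂ h := ⟨Z, 𝟙 Z, W.id_mem Z, by simpa using h⟩
  comp_mem f g hf hg Z h₁ h₂ h := by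
    obtain ⟨Z', t, ht, e⟩ := hf (g ≫ h₁) (g ≫ h₂) (by simpa using h)
    obtain ⟨Z'', t', ht', e'⟩ := hg (h₁ ≫ t) (h₂ ≫ t) (by simpa using e)
    exact ⟨Z'', t ≫ t', W.comp_mem _ _ ht ht', by simpa using e'⟩

instance (W : MorphismProperty C) [W.IsMultiplicative] : (leftOre W).IsMultiplicative where
  id_mem X Y f := ⟨Y, f, 𝟙 Y, W.id_mem Y, by simp⟩
  comp_mem s₁ s₂ hs₁ hs₂ Y f := by
    obtain ⟨Y₁, f₁, t₁, ht₁, e₁⟩ := hs₁ f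
    obtain ⟨Y₂, f₂, t₂, ht₂, e₂⟩ := hs₂ f₁
    exact ⟨Y₂, f₂, t₁ ≫ t₂, W.comp_mem _ _ ht₁ ht₂, by
      rw [reassoc_of% e₁, e₂, Category.assoc]⟩

theorem hasLeftCalculusOfFractions_multiplicativeClosure {W : MorphismProperty C}
    (h_ore : W ≤ leftOre W) (h_epi : W ≤ epiModulo W) :
    W.multiplicativeClosure.HasLeftCalculusOfFractions where
  exists_leftFraction X Y φ := by
    have h : W.multiplicativeClosure ≤ leftOre W.multiplicativeClosure :=
      (multiplicativeClosure_le_iff _ _).2 (h_ore.trans (leftOre_mono W.le_multiplicativeClosure))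
    obtain ⟨Y', f', s', hs', e⟩ := h _ φ.hs φ.f
    exact ⟨⟨f', s', hs'⟩, e⟩
  ext X' X Y f₁ f₂ s hs hf := by
    have h : W.multiplicativeClosure ≤ epiModulo W.multiplicativeClosure :=
      (multiplicativeClosure_le_iff _ _).2
        (h_epi.trans (epiModulo_mono W.le_multiplicativeClosure))
    exact h _ hs f₁ f₂ hf

theorem isLocalization_multiplicativeClosure (L : C ⥤ D) (W : MorphismProperty C)
    [L.IsLocalization W] : L.IsLocalization W.multiplicativeClosure := by
  have h_inv : W.multiplicativeClosure ≤ (isomorphisms D).inverseImage L :=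
    (multiplicativeClosure_le_iff _ _).2 fun _ _ f hf => Localization.inverts L W f hf
  exact Functor.IsLocalization.of_equivalence_source L W L W.multiplicativeClosure
    CategoryTheory.Equivalence.refl
    (W.le_multiplicativeClosure.trans (le_isoClosure _)) h_inv L.leftUnitor

theorem epi_map_of_hasLeftCalculusOfFractions (L : C ⥤ D) {W : MorphismProperty C}
    [L.IsLocalization W] [W.HasLeftCalculusOfFractions] {X Y : C} {f : X ⟶ Y}
    (hf : epiModulo W f) : Epi (L.map f) := by
  have h_cancel {Z : C} (g₁ g₂ : L.obj Y ⟶ L.obj Z) (h : L.map f ≫ g₁ = L.map f ≫ g₂) :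
      g₁ = g₂ := by
    obtain ⟨α, rfl, rfl⟩ := Localization.exists_leftFraction₂ L W g₁ g₂
    have := Localization.inverts L W α.s α.hs
    have h_num : L.map (f ≫ α.f) = L.map (f ≫ α.f') := by
      rw [L.map_comp, L.map_comp, ← α.fst.map_comp_map_s L (Localization.inverts L W),
        ← α.snd.map_comp_map_s L (Localization.inverts L W), reassoc_of% h]
    obtain ⟨Z₁, t, ht, e⟩ := (map_eq_iff_postcomp L W _ _).1 h_num
    obtain ⟨Z₂, t', ht', e'⟩ := hf (α.f ≫ t) (α.f' ≫ t) (by simpa using e)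
    rw [← cancel_mono (L.map α.s)]
    refine (α.fst.map_comp_map_s L _).trans (Eq.trans ?_ (α.snd.map_comp_map_s L _).symm)
    exact (map_eq_iff_postcomp L W _ _).2
      ⟨Z₂, t ≫ t', W.comp_mem _ _ ht ht', by simpa using e'⟩
  have := Localization.essSurj L W
  refine ⟨fun {Z} g₁ g₂ h => ?_⟩
  rw [← cancel_mono (L.objObjPreimageIso Z).inv]
  exact h_cancel _ _ (by rw [reassoc_of% h])

theorem epi_map_of_epiModulo (L : C ⥤ D) {W : MorphismProperty C} [L.IsLocalization W]
    (h_ore : W ≤ leftOre W) (h_epi : W ≤ epiModulo W) {X Y : C} {f : X ⟶ Y}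
    (hf : epiModulo W f) : Epi (L.map f) :=
  have := hasLeftCalculusOfFractions_multiplicativeClosure h_ore h_epi
  have := isLocalization_multiplicativeClosure L W
  epi_map_of_hasLeftCalculusOfFractions L (epiModulo_mono W.le_multiplicativeClosure _ hf)

end CalculusOfFractions

section GradedModules

variable {R : GAlgebra k G} {M N P : GrMod R}

theorem GrMod.hom_ext {f g : M ⟶ N} (h : ∀ a x, GrHom.app f a x = GrHom.app g a x) : f = g :=
  GrHom.ext (funext fun a => LinearMap.ext (h a))

@[simp]
theorem GrHom.comp_app_apply (f : M ⟶ N) (g : N ⟶ P) (a : G) (x : M.M a) :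
    GrHom.app (f ≫ g) a x = GrHom.app g a (GrHom.app f a x) :=
  rfl

namespace GrSubmodule

/-- The quotient of a graded module by a graded submodule. -/
def quotient (T : GrSubmodule N) : GrMod R where
  M a := N.M a ⧸ T.S a
  act {a b} := (T.S a).liftQ (N.act.compr₂ (T.S b).mkQ) fun x hx => by
    ext r
    simpa using T.act_mem x hx r
  act_one {a} x := by
    obtain ⟨x, rfl⟩ := (T.S a).mkQ_surjective x
    exact congrArg (T.S a).mkQ (N.act_one x)
  act_mul {a b c} x r s := by
    obtain ⟨x, rfl⟩ := (T.S a).mkQ_surjective x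
    exact congrArg (T.S c).mkQ (N.act_mul x r s)

/-- The projection onto the quotient by a graded submodule. -/
def mkQ (T : GrSubmodule N) : N ⟶ T.quotient where
  app a := (T.S a).mkQ
  natural _ _ := rfl

theorem mkQ_app_surjective (T : GrSubmodule N) (a : G) : Function.Surjective (GrHom.app T.mkQ a) :=
  (T.S a).mkQ_surjective

theorem mkQ_app_eq_iff (T : GrSubmodule N) {a : G} {x y : N.M a} :
    GrHom.app T.mkQ a x = GrHom.app T.mkQ a y ↔ x - y ∈ T.S a :=
  Submodule.Quotient.eq _

theorem mkQ_app_eq_zero_iff (T : GrSubmodule N) {a : G} {x : N.M a} :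
    GrHom.app T.mkQ a x = 0 ↔ x ∈ T.S a :=
  Submodule.Quotient.mk_eq_zero _

/-- The image of `f - g`; the quotient by it is the coequalizer of `f` and `g`. -/
def rangeSub (f g : M ⟶ N) : GrSubmodule N where
  S a := LinearMap.range (GrHom.app f a - GrHom.app g a)
  act_mem := by
    rintro a b _ ⟨x, rfl⟩ r
    exact ⟨M.act x r, by simp [GrHom.natural]⟩

theorem comp_mkQ_rangeSub (f g : M ⟶ N) : f ≫ (rangeSub f g).mkQ = g ≫ (rangeSub f g).mkQ :=
  GrMod.hom_ext fun _ x => (mkQ_app_eq_iff _).2 ⟨x, rfl⟩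

end GrSubmodule

namespace GrMod

/-- The direct sum of two graded modules. -/
def prod (M N : GrMod R) : GrMod R where
  M a := M.M a × N.M a
  act {a b} := LinearMap.mk₂ k (fun x r => (M.act x.1 r, N.act x.2 r))
    (by simp) (by simp) (by simp) (by simp)
  act_one x := by simp [M.act_one, N.act_one]
  act_mul x r s := by simp [M.act_mul, N.act_mul]

/-- The inclusion of the first summand. -/
def inl (M N : GrMod R) : M ⟶ M.prod N where
  app a := LinearMap.inl k (M.M a) (N.M a)
  natural _ r := Prod.ext rfl (LinearMap.map_zero₂ N.act r).symm

/-- The inclusion of the second summand. -/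
def inr (M N : GrMod R) : N ⟶ M.prod N where
  app a := LinearMap.inr k (M.M a) (N.M a)
  natural _ r := Prod.ext (LinearMap.map_zero₂ M.act r).symm rfl

variable (f : M ⟶ N) (s : M ⟶ P)

/-- The relations `(f x, 0) = (0, s x)` in `N ⊕ P` defining the pushout of `f` and `s`. -/
def pushoutRel : GrSubmodule (N.prod P) :=
  GrSubmodule.rangeSub (f ≫ inl N P) (s ≫ inr N P)

theorem mem_pushoutRel_iff {a : G} {y : N.M a} {z : P.M a} :
    (y, z) ∈ (pushoutRel f s).S a ↔ ∃ x, GrHom.app f a x = y ∧ -GrHom.app s a x = z := by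
  refine exists_congr fun x => Prod.ext_iff.trans ?_
  change GrHom.app f a x - 0 = y ∧ 0 - GrHom.app s a x = z ↔ _
  rw [sub_zero, zero_sub]

/-- The canonical map `N ⟶ (N ⊕ P) / {(f x, -s x)}` to the pushout of `f` and `s`. -/
def pushoutInl : N ⟶ (pushoutRel f s).quotient := inl N P ≫ (pushoutRel f s).mkQ

/-- The canonical map `P ⟶ (N ⊕ P) / {(f x, -s x)}` to the pushout of `f` and `s`. -/
def pushoutInr : P ⟶ (pushoutRel f s).quotient := inr N P ≫ (pushoutRel f s).mkQ

theorem comp_pushoutInl : f ≫ pushoutInl f s = s ≫ pushoutInr f s :=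
  GrSubmodule.comp_mkQ_rangeSub (f ≫ inl N P) (s ≫ inr N P)

end GrMod

end GradedModules

section Torsion

variable [LE G] {R : GAlgebra k G} {M N P : GrMod R}

/-- The kernel of `f` is a torsion module. -/
def HasTorsionKernel (f : M ⟶ N) : Prop :=
  ∀ (a : G) (x : M.M a), GrHom.app f a x = 0 →
    ∃ g0 : G, ∀ b : G, g0 ≤ b → ∀ r : R.C a b, M.act x r = 0

/-- The cokernel of `f` is a torsion module, in terms of representatives in `N`. -/
def HasTorsionCokernel (f : M ⟶ N) : Prop :=
  ∀ (a : G) (y : N.M a), ∃ g0 : G, ∀ b : G, g0 ≤ b → ∀ r : R.C a b,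
    N.act y r ∈ LinearMap.range (GrHom.app f b)

theorem torsionW_iff {f : M ⟶ N} :
    torsionW R f ↔ HasTorsionKernel f ∧ HasTorsionCokernel f :=
  Iff.rfl

theorem hasTorsionCokernel_of_surjective {f : M ⟶ N} (c : G)
    (hf : ∀ b, c ≤ b → Function.Surjective (GrHom.app f b)) : HasTorsionCokernel f :=
  fun _ _ => ⟨c, fun b hb _ => hf b hb _⟩

theorem hasTorsionKernel_mkQ_rangeSub {f : M ⟶ N} (hf : HasTorsionCokernel f) {g₁ g₂ : N ⟶ P}
    (hg : f ≫ g₁ = f ≫ g₂) : HasTorsionKernel (GrSubmodule.rangeSub g₁ g₂).mkQ := by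
  intro a z hz
  obtain ⟨y, rfl⟩ := (GrSubmodule.mkQ_app_eq_zero_iff _).1 hz
  obtain ⟨g0, hg0⟩ := hf a y
  refine ⟨g0, fun b hb r => ?_⟩
  obtain ⟨x, hx⟩ := hg0 b hb r
  have h_agree : GrHom.app g₁ b (N.act y r) = GrHom.app g₂ b (N.act y r) := by
    rw [← hx, ← GrHom.comp_app_apply, ← GrHom.comp_app_apply, hg]
  simpa [GrHom.natural, sub_eq_zero] using h_agree

theorem HasTorsionCokernel.epiModulo {f : M ⟶ N} (hf : HasTorsionCokernel f) :
    epiModulo (torsionW R) f := fun _ g₁ g₂ hg =>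
  ⟨_, (GrSubmodule.rangeSub g₁ g₂).mkQ,
    torsionW_iff.2 ⟨hasTorsionKernel_mkQ_rangeSub hf hg,
      fun a _ => ⟨a, fun b _ _ => GrSubmodule.mkQ_app_surjective _ b _⟩⟩,
    GrSubmodule.comp_mkQ_rangeSub g₁ g₂⟩

theorem HasTorsionKernel.pushoutInl (f : M ⟶ N) {s : M ⟶ P} (hs : HasTorsionKernel s) :
    HasTorsionKernel (GrMod.pushoutInl f s) := by
  intro a y hy
  obtain ⟨x, rfl, hsx⟩ := (GrMod.mem_pushoutRel_iff f s).1
    ((GrSubmodule.mkQ_app_eq_zero_iff _).1 hy)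
  obtain ⟨g0, hg0⟩ := hs a x (neg_eq_zero.1 hsx)
  exact ⟨g0, fun b hb r => by rw [← GrHom.natural, hg0 b hb r, map_zero]⟩

theorem HasTorsionCokernel.pushoutInl (f : M ⟶ N) {s : M ⟶ P} (hs : HasTorsionCokernel s) :
    HasTorsionCokernel (GrMod.pushoutInl f s) := by
  intro a q
  obtain ⟨⟨y, z⟩, rfl⟩ := GrSubmodule.mkQ_app_surjective _ a q
  obtain ⟨g0, hg0⟩ := hs a z
  refine ⟨g0, fun b hb r => ?_⟩
  obtain ⟨x, hx⟩ := hg0 b hb r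
  -- In the pushout, `(y, z) r = (y r, s x) = (y r + f x, 0)`.
  refine ⟨N.act y r + GrHom.app f b x, (GrSubmodule.mkQ_app_eq_iff _).2 ?_⟩
  refine (GrMod.mem_pushoutRel_iff f s).2 ⟨x, ?_, ?_⟩
  · exact (add_sub_cancel_left _ _).symm
  · exact (congrArg Neg.neg hx).trans (zero_sub _).symm

theorem torsionW_le_leftOre : torsionW R ≤ leftOre (torsionW R) := fun _ _ s hs _ f =>
  ⟨_, GrMod.pushoutInr f s, GrMod.pushoutInl f s,
    torsionW_iff.2 ⟨HasTorsionKernel.pushoutInl f hs.1, HasTorsionCokernel.pushoutInl f hs.2⟩,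
    GrMod.comp_pushoutInl f s⟩

theorem HasTorsionCokernel.epi_Q_map {f : M ⟶ N} (hf : HasTorsionCokernel f) :
    Epi ((torsionW R).Q.map f) :=
  epi_map_of_epiModulo (torsionW R).Q torsionW_le_leftOre
    (fun _ _ _ hs => (torsionW_iff.1 hs).2.epiModulo) hf.epiModulo

end Torsion

section FreeModules

variable {R : GAlgebra k G} {n : ℕ}

/-- The morphism out of a finite direct sum given by its restrictions to the summands. -/
def fdsumDesc {F : Fin n → GrMod R} {N : GrMod R} (φ : ∀ i, F i ⟶ N) : fdsum F ⟶ N where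
  app a := LinearMap.lsum k (fun i => (F i).M a) k fun i => GrHom.app (φ i) a
  natural {a b} (x : ∀ i, (F i).M a) r := by
    change LinearMap.lsum k _ k (fun i => GrHom.app (φ i) b) (fun i => (F i).act (x i) r) =
      N.act (LinearMap.lsum k _ k (fun i => GrHom.app (φ i) a) x) r
    simp [GrHom.natural]

theorem fdsumDesc_app_single {F : Fin n → GrMod R} {N : GrMod R} (φ : ∀ i, F i ⟶ N) (a : G)
    (i : Fin n) (x : (F i).M a) :
    GrHom.app (fdsumDesc φ) a (Pi.single i x) = GrHom.app (φ i) a x :=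
  LinearMap.lsum_piSingle k (fun i => (F i).M a) k (fun i => GrHom.app (φ i) a) i x

/-- The morphism `e_c R^{⊕n} ⟶ e_a R` given by left multiplication with the row
`g ∈ (R_{a,c})^n`. -/
def mulHom {a c : G} (g : Fin n → R.C a c) : fdsum (fun _ : Fin n => freeMod R c) ⟶ freeMod R a :=
  fdsumDesc fun i => freeHom (g i)

theorem mul_mem_range_mulHom {a c : G} {g : Fin n → R.C a c}
    (hg : Submodule.span k (Set.range g) = ⊤) {b : G} (u : R.C a c) (v : R.C c b) :
    R.mul u v ∈ LinearMap.range (GrHom.app (mulHom g) b) := by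
  have h_span : Submodule.span k (Set.range g) ≤
      (LinearMap.range (GrHom.app (mulHom g) b)).comap (R.mul.flip v) := by
    rw [Submodule.span_le]
    rintro _ ⟨i, rfl⟩
    exact ⟨Pi.single i v, fdsumDesc_app_single (fun i => freeHom (g i)) b i v⟩
  exact h_span (hg ▸ Submodule.mem_top)

theorem mulHom_app_surjective {a c : G} {g : Fin n → R.C a c}
    (hg : Submodule.span k (Set.range g) = ⊤) {b : G}
    (h_gen : ∀ x : R.C a b, x ∈ Submodule.span k {y : R.C a b |
      ∃ (u : R.C a c) (v : R.C c b), y = R.mul u v}) :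
    Function.Surjective (GrHom.app (mulHom g) b) := by
  have h_le : Submodule.span k {y : R.C a b | ∃ (u : R.C a c) (v : R.C c b), y = R.mul u v} ≤
      LinearMap.range (GrHom.app (mulHom g) b) := by
    refine Submodule.span_le.2 ?_
    rintro _ ⟨u, v, rfl⟩
    exact mul_mem_range_mulHom hg u v
  exact fun x => h_le (h_gen x)

end FreeModules

theorem epi_onto_free_general [LE G] (R : GAlgebra k G) (a c : G)
    [FiniteDimensional k (R.C a c)]
    (h_gen : ∀ b, c ≤ b → ∀ x : R.C a b, x ∈ Submodule.span k {y : R.C a b |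
      ∃ (u : R.C a c) (v : R.C c b), y = R.mul u v}) :
    ∃ φ : fdsum (fun _ : Fin (Module.finrank k (R.C a c)) => freeMod R c) ⟶ freeMod R a,
      (∀ b, c ≤ b → Function.Surjective (GrHom.app φ b)) ∧ HasTorsionCokernel φ ∧
      Epi ((torsionW R).Q.map φ) := by
  have h_surj (b : G) (hb : c ≤ b) := mulHom_app_surjective
    (Module.finBasis k (R.C a c)).span_eq (h_gen b hb)
  have h_coker := hasTorsionCokernel_of_surjective c h_surj
  exact ⟨_, h_surj, h_coker, h_coker.epi_Q_map⟩

/-- For each `(m,n) ∈ ℤ²` there are morphisms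
`e_{(m+1,n)}R^{⊕N} → e_{(m,n)}R` (with `N = dim_k R_{(m,n),(m+1,n)}`)
and `e_{(m,n+1)}R^{⊕N'} → e_{(m,n)}R` (with `N' = dim_k R_{(m,n),(m,n+1)}`)
in `Gr(R)`, surjective in all degrees `(x,y)` with `x > m, y ≥ n`
(resp. `x ≥ m, y > n`), with torsion cokernel; hence both become
epimorphisms in `QGr(R)`. -/
theorem epi_onto_free (k : Type) [Field k] (R : GAlgebra k (ℤ × ℤ))
    (hR : Standing R) (m n : ℤ) :
    (∃ φ : fdsum (fun _ : Fin (Module.finrank k (R.C (m, n) (m + 1, n))) =>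
        freeMod R (m + 1, n)) ⟶ freeMod R (m, n),
      (∀ x y : ℤ, m < x → n ≤ y → Function.Surjective (GrHom.app φ (x, y))) ∧
      (∀ (a : ℤ × ℤ) (z : R.C (m, n) a), ∃ g0 : ℤ × ℤ, ∀ b : ℤ × ℤ, g0 ≤ b →
        ∀ r : R.C a b, R.mul z r ∈ LinearMap.range (GrHom.app φ b)) ∧
      CategoryTheory.Epi ((torsionW R).Q.map φ)) ∧
    (∃ ψ : fdsum (fun _ : Fin (Module.finrank k (R.C (m, n) (m, n + 1))) =>
        freeMod R (m, n + 1)) ⟶ freeMod R (m, n),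
      (∀ x y : ℤ, m ≤ x → n < y → Function.Surjective (GrHom.app ψ (x, y))) ∧
      (∀ (a : ℤ × ℤ) (z : R.C (m, n) a), ∃ g0 : ℤ × ℤ, ∀ b : ℤ × ℤ, g0 ≤ b →
        ∀ r : R.C a b, R.mul z r ∈ LinearMap.range (GrHom.app ψ b)) ∧
      CategoryTheory.Epi ((torsionW R).Q.map ψ)) := by
  have := hR.finDim
  obtain ⟨φ, hφ, hφ'⟩ := epi_onto_free_general R (m, n) (m + 1, n)
    fun b (hb : (m + 1, n) ≤ b) => hR.genH m n b.1 b.2 hb.1 hb.2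
  obtain ⟨ψ, hψ, hψ'⟩ := epi_onto_free_general R (m, n) (m, n + 1)
    fun b (hb : (m, n + 1) ≤ b) => hR.genV m n b.1 b.2 hb.1 hb.2
  exact ⟨⟨φ, fun x y hx hy => hφ (x, y) ⟨hx, hy⟩, hφ'⟩,
    ⟨ψ, fun x y hx hy => hψ (x, y) ⟨hx, hy⟩, hψ'⟩⟩
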